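/- Let μ ∈ ℝ, set α := −iμ/2, let β ∈ ℝ, and let u : ℝ → ℂ be a smooth solution of the PII equation u''(x) = x·u(x) + 2·u(x)³ − α on ℝ, taking purely imaginary values on ℝ. Define w(x) := ∫₀ˣ exp( (2/3^{1/3}) ∫₀^y u(z/3^{1/3}) dz ) dy − C with C := (2·3^{1/3}/(1−iμ))·(u'(0) − u(0)²), and define z : (0,∞)×ℝ → ℂ by z(t,x) := e^{iβ}·t^{1/3}·e^{−(iμ/3)·ln t}·w(x·t^{−1/3}). Then for all t > 0 and x ∈ ℝ: ∂_t z(t,x) = −∂_x³ z(t,x) + (3/2)·conj(∂_x z(t,x))·(∂_x² z(t,x))², and |∂_x z(t,x)| = 1. -/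

import Mathlib

/-!
Write `c = 3^{1/3}`, `E(s) = exp ((2/c) ∫₀ˢ u(y/c) dy)`, so that `w' = E`. Since `u` is purely
imaginary, `|E| = 1`. Substituting the self-similar form with `s = x t^{-1/3}` and using
`conj(E) E² = E` and `c³ = 3`, the flow equation reduces to the first-order identity
`(1 - iμ) w(s) = s E(s) + 2c (u(s/c)² - u'(s/c)) E(s)` (`profile_identity`). The difference of its
two sides has zero derivative by the Painlevé equation (`α = -iμ/2` enters here), and it vanishes
at `s = 0` exactly because of the choice of the constant `C`.
-/

/-- The real cube root of 3. -/
noncomputable def cbrt3 : ℝ := (3 : ℝ) ^ ((1:ℝ)/3)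

lemma cbrt3_pos : 0 < cbrt3 := by unfold cbrt3; positivity

lemma cbrt3_cube : cbrt3 ^ 3 = 3 := by
  unfold cbrt3
  rw [← Real.rpow_natCast, ← Real.rpow_mul (by norm_num)]
  norm_num

/-- The unit tangent `E(s) = exp ((2/3^{1/3}) ∫₀ˢ u(y/3^{1/3}) dy)` of the profile curve `w`. -/
noncomputable def tangent (u : ℝ → ℂ) (s : ℝ) : ℂ :=
  Complex.exp (((2 / cbrt3 : ℝ) : ℂ) * ∫ y in (0:ℝ)..s, u (y / cbrt3))

lemma hasDerivAt_tangent {u : ℝ → ℂ} (hu : Continuous u) (s : ℝ) :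
    HasDerivAt (tangent u) (2 / cbrt3 * u (s / cbrt3) * tangent u s) s := by
  have hc : Continuous fun y : ℝ => u (y / cbrt3) := by fun_prop
  have h := (((hc.integral_hasStrictDerivAt 0 s).hasDerivAt).const_mul
    (((2 / cbrt3 : ℝ) : ℂ))).cexp
  refine h.congr_deriv ?_
  simp only [tangent]
  push_cast
  ring

lemma norm_tangent {u : ℝ → ℂ} (hu : Continuous u) (him : ∀ x, (u x).re = 0) (s : ℝ) :
    ‖tangent u s‖ = 1 := by
  have hc : Continuous fun y : ℝ => u (y / cbrt3) := by fun_prop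
  have hre : (∫ y in (0:ℝ)..s, u (y / cbrt3)).re = 0 := by
    have h := Complex.reCLM.intervalIntegral_comp_comm
      (hc.intervalIntegrable (μ := MeasureTheory.volume) 0 s)
    simp only [Complex.reCLM_apply, him, intervalIntegral.integral_zero] at h
    exact h.symm
  rw [tangent, Complex.norm_exp, Complex.re_ofReal_mul, hre]
  simp

/-- Differentiation of a function of `s / 3^{1/3}`. -/
lemma hasDerivAt_comp_div {f : ℝ → ℂ} {f' : ℂ} {s : ℝ} (h : HasDerivAt f f' (s / cbrt3)) :
    HasDerivAt (fun y : ℝ => f (y / cbrt3)) (f' / cbrt3) s := by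
  have h2 : HasDerivAt (fun y : ℝ => y / cbrt3) (1 / cbrt3) s := (hasDerivAt_id s).div_const _
  refine (h.scomp s h2).congr_deriv ?_
  rw [Complex.real_smul]
  push_cast
  ring

/-- The once-integrated profile equation: the part of the flow equation that remains after the
self-similar substitution. -/
lemma profile_identity {μ : ℝ} {α : ℂ} (hα : α = -Complex.I * μ / 2)
    {u : ℝ → ℂ} (hu : ContDiff ℝ (⊤ : ℕ∞) u)
    (hP : ∀ x : ℝ, deriv (deriv u) x = (x : ℂ) * u x + 2 * (u x) ^ 3 - α)
    {w : ℝ → ℂ} (hw : ∀ s, HasDerivAt w (tangent u s) s)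
    (hw0 : w 0 = -((2 * cbrt3 / (1 - Complex.I * μ)) * (deriv u 0 - (u 0) ^ 2))) (s : ℝ) :
    (1 - Complex.I * μ) * w s = s * tangent u s +
      2 * cbrt3 * (u (s / cbrt3) ^ 2 - deriv u (s / cbrt3)) * tangent u s := by
  have hc0 : (cbrt3 : ℂ) ≠ 0 := by exact_mod_cast cbrt3_pos.ne'
  have hd1 : Differentiable ℝ u := hu.differentiable (by simp)
  have hd2 : Differentiable ℝ (deriv u) := by
    have : ContDiff ℝ 2 u := contDiff_infty.mp hu 2
    exact (this.deriv' (n := 1)).differentiable (by simp)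
  set F : ℝ → ℂ := fun s => (1 - Complex.I * μ) * w s - (s * tangent u s +
      2 * cbrt3 * (u (s / cbrt3) ^ 2 - deriv u (s / cbrt3)) * tangent u s) with hF
  have hFd : ∀ s, HasDerivAt F 0 s := by
    intro s
    have e := hasDerivAt_tangent hd1.continuous s
    have a := hasDerivAt_comp_div (hd1 (s / cbrt3)).hasDerivAt
    have b := hasDerivAt_comp_div (hd2 (s / cbrt3)).hasDerivAt
    have i : HasDerivAt (fun s : ℝ => (s : ℂ)) 1 s := Complex.ofRealCLM.hasDerivAt
    have h := ((hw s).const_mul (1 - Complex.I * μ)).sub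
      ((i.mul e).add ((((a.pow 2).sub b).const_mul (2 * (cbrt3 : ℂ))).mul e))
    refine h.congr_deriv ?_
    rw [hP, hα]
    simp only [Pi.sub_apply, Pi.pow_apply]
    push_cast
    field_simp
    ring
  have hconst := is_const_of_deriv_eq_zero (fun s => (hFd s).differentiableAt)
    (fun s => (hFd s).deriv) s 0
  have hμ : (1 - Complex.I * μ : ℂ) ≠ 0 := by
    intro h
    have := congrArg Complex.re h
    simp at this
  have h0 : F 0 = 0 := by
    simp only [hF, hw0, tangent]
    simp
    field_simp
    ring
  rw [h0] at hconst
  exact sub_eq_zero.mp hconst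

/-- The self-similar function `z(t,x) = e^{iβ} t^{1/3} e^{-(iμ/3) ln t} w(x t^{-1/3})`
solves the geometric flow `z_t = -z_xxx + (3/2) conj(z_x) z_xx²`, `|z_x| = 1` on `(0,∞)×ℝ`. -/
theorem stmt_16 (μ β : ℝ) (α : ℂ) (hα : α = -Complex.I * μ / 2)
    (u : ℝ → ℂ) (hu : ContDiff ℝ (⊤ : ℕ∞) u)
    (hP : ∀ x : ℝ, deriv (deriv u) x = (x : ℂ) * u x + 2 * (u x) ^ 3 - α)
    (him : ∀ x : ℝ, (u x).re = 0)
    (Cc : ℂ)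
    (hC : Cc = (2 * cbrt3 / (1 - Complex.I * μ)) * (deriv u 0 - (u 0) ^ 2))
    (w : ℝ → ℂ)
    (hw : ∀ x : ℝ, w x =
      (∫ y in (0:ℝ)..x, Complex.exp (((2 / cbrt3 : ℝ) : ℂ) *
        ∫ z in (0:ℝ)..y, u (z / cbrt3))) - Cc)
    (z : ℝ → ℝ → ℂ)
    (hz : ∀ t : ℝ, 0 < t → ∀ x : ℝ, z t x =
      Complex.exp (Complex.I * β) * ((t ^ ((1:ℝ)/3) : ℝ) : ℂ) *
        Complex.exp (-(Complex.I * μ / 3) * Real.log t) *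
        w (x * t ^ (-(1:ℝ)/3))) :
    ∀ t : ℝ, 0 < t → ∀ x : ℝ,
      (deriv (fun s : ℝ => z s x) t =
        -(deriv (deriv (deriv (z t))) x) +
          (3/2) * (starRingEnd ℂ) (deriv (z t) x) * (deriv (deriv (z t)) x) ^ 2) ∧
      ‖deriv (z t) x‖ = 1 := by
  intro t ht x
  have hcC : (cbrt3 : ℂ) ≠ 0 := by exact_mod_cast cbrt3_pos.ne'
  have hc3 : (cbrt3 : ℂ) ^ 3 = 3 := by exact_mod_cast cbrt3_cube
  have hd1 : Differentiable ℝ u := hu.differentiable (by simp)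
  have hwd : ∀ s, HasDerivAt w (tangent u s) s := by
    intro s
    have hE : Continuous (tangent u) := continuous_iff_continuousAt.mpr
      fun y => (hasDerivAt_tangent hd1.continuous y).continuousAt
    have h := ((hE.integral_hasStrictDerivAt 0 s).hasDerivAt).sub_const Cc
    exact h.congr_of_eventuallyEq (Filter.Eventually.of_forall hw)
  have key := profile_identity hα hu hP hwd (by rw [hw, ← hC]; simp)
  -- `r = t^{-1/3}`, and `a` is the unimodular factor of `z_x = a * E`.
  set r : ℝ := t ^ (-(1:ℝ)/3) with hr
  set a : ℂ := Complex.exp (Complex.I * β) * Complex.exp (-(Complex.I * μ / 3) * Real.log t) with ha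
  have hrpos : 0 < r := by positivity
  have hrC : (r : ℂ) ≠ 0 := by exact_mod_cast hrpos.ne'
  have hr1 : t ^ ((1:ℝ)/3) = r⁻¹ := by
    rw [hr, ← Real.rpow_neg ht.le]; norm_num
  have hrt : r ^ 3 = t⁻¹ := by
    rw [hr, ← Real.rpow_natCast, ← Real.rpow_mul ht.le, ← Real.rpow_neg_one]; norm_num
  have hrtC : (r : ℂ) ^ 3 = (t : ℂ)⁻¹ := by exact_mod_cast hrt
  have htC : (t : ℂ) ≠ 0 := by exact_mod_cast ht.ne'
  have hna : ‖a‖ = 1 := by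
    rw [ha, ← Complex.exp_add, Complex.norm_exp]
    simp
  have hscale : ∀ y : ℝ, HasDerivAt (fun y : ℝ => y * r) r y := fun y => by
    simpa using (hasDerivAt_id y).mul_const r
  have hzt : z t = fun y => a * (r : ℂ)⁻¹ * w (y * r) := by
    funext y
    rw [hz t ht y, hr1, ha]
    push_cast
    ring
  have hz1 : deriv (z t) = fun y => a * tangent u (y * r) := by
    funext y
    rw [hzt]
    refine (((hwd (y * r)).scomp y (hscale y)).const_mul (a * (r : ℂ)⁻¹)).deriv.trans ?_
    rw [Complex.real_smul]
    field_simp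
  have hz2 : deriv (deriv (z t)) = fun y =>
      a * r * (2 / cbrt3) * (u (y * r / cbrt3) * tangent u (y * r)) := by
    funext y
    rw [hz1]
    refine (((hasDerivAt_tangent hd1.continuous (y * r)).scomp y
      (hscale y)).const_mul a).deriv.trans ?_
    rw [Complex.real_smul]
    ring
  have hz3 : deriv (deriv (deriv (z t))) x =
      a * r ^ 2 * (2 / cbrt3) * (deriv u (x * r / cbrt3) / cbrt3 * tangent u (x * r) +
        u (x * r / cbrt3) * (2 / cbrt3 * u (x * r / cbrt3) * tangent u (x * r))) := by
    rw [hz2]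
    have h := (hasDerivAt_comp_div (hd1 (x * r / cbrt3)).hasDerivAt).mul
      (hasDerivAt_tangent hd1.continuous (x * r))
    refine ((h.scomp x (hscale x)).const_mul (a * r * (2 / cbrt3))).deriv.trans ?_
    rw [Complex.real_smul]
    ring
  have hnE := norm_tangent hd1.continuous him (x * r)
  have hnz : ‖a * tangent u (x * r)‖ = 1 := by rw [norm_mul, hna, hnE, one_mul]
  refine ⟨?_, by rw [hz1]; exact hnz⟩
  have hconj : (starRingEnd ℂ) (a * tangent u (x * r)) * (a * tangent u (x * r)) = 1 := by
    rw [Complex.conj_mul', hnz]; simp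
  have hzs : deriv (fun s : ℝ => z s x) t = a * (r : ℂ)⁻¹ / (3 * t) *
      ((1 - Complex.I * μ) * w (x * r) - (x * r : ℝ) * tangent u (x * r)) := by
    have h1 : HasDerivAt (fun s : ℝ => ((s ^ ((1:ℝ)/3) : ℝ) : ℂ)) ((r⁻¹ / (3 * t) : ℝ) : ℂ) t := by
      refine HasDerivAt.ofReal_comp ?_
      refine (Real.hasDerivAt_rpow_const (p := (1:ℝ)/3) (Or.inl ht.ne')).congr_deriv ?_
      rw [Real.rpow_sub_one ht.ne', hr1]
      field_simp
    have h2 : HasDerivAt (fun s : ℝ => Complex.exp (-(Complex.I * μ / 3) * Real.log s))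
        (Complex.exp (-(Complex.I * μ / 3) * Real.log t) *
          (-(Complex.I * μ / 3) * ((t⁻¹ : ℝ) : ℂ))) t :=
      (((Real.hasDerivAt_log ht.ne').ofReal_comp).const_mul _).cexp
    have h3 : HasDerivAt (fun s : ℝ => x * s ^ (-(1:ℝ)/3)) (-(x * r) / (3 * t)) t := by
      refine ((Real.hasDerivAt_rpow_const (p := -(1:ℝ)/3) (Or.inl ht.ne')).const_mul x).congr_deriv ?_
      rw [Real.rpow_sub_one ht.ne', ← hr]
      field_simp
    have h4 := (hwd (x * r)).scomp t h3
    have h := ((h1.const_mul (Complex.exp (Complex.I * β))).mul h2).mul h4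
    have heq : (fun s : ℝ => z s x) =ᶠ[nhds t] _ :=
      Filter.eventually_of_mem (Ioi_mem_nhds ht) fun s hs => hz s hs x
    rw [heq.deriv_eq]
    refine h.deriv.trans ?_
    simp only [Function.comp_apply, Complex.real_smul, Pi.mul_apply, ← hr, hr1, ha]
    push_cast
    field_simp
    ring
  rw [hzs, key, hz3, hz2, hz1]
  have hnl : ∀ U : ℂ, (3/2) * (starRingEnd ℂ) (a * tangent u (x * r)) *
      (a * r * (2 / cbrt3) * (U * tangent u (x * r))) ^ 2 =
      6 * a * r ^ 2 / cbrt3 ^ 2 * U ^ 2 * tangent u (x * r) := by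
    intro U
    linear_combination (6 * a * r ^ 2 / cbrt3 ^ 2 * U ^ 2 * tangent u (x * r)) * hconj
  have hrt2 : (r : ℂ)⁻¹ / (3 * t) = r ^ 2 / 3 := by
    rw [div_eq_mul_inv, mul_inv, ← hrtC]
    field_simp
  have hc2 : (cbrt3 : ℂ) / 3 = 1 / cbrt3 ^ 2 := by
    rw [div_eq_div_iff (by norm_num) (by positivity), ← hc3]
    ring
  beta_reduce
  rw [hnl, mul_div_assoc, hrt2]
  linear_combination (2 * a * r ^ 2 * (u (x * r / cbrt3) ^ 2 - deriv u (x * r / cbrt3)) *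
    tangent u (x * r)) * hc2
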